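/- Let n(t) := (cos t, sin t, 0), τ(t) := (−sin t, cos t, 0), fix 0 < κ² < 3, set c_κ² := (κ² − √(κ⁴ + 16) + 4)/2 and φ_κ := (1/2) arctan(4/κ²). A C¹ 2π-periodic map u : ℝ → ℝ³ satisfies ∫_{−π}^{π} |u'(t)|² dt + κ² ∫_{−π}^{π} |u(t) × n(t)|² dt = c_κ² ∫_{−π}^{π} |u(t)|² dt with ∫_{−π}^{π} |u(t)|² dt = 2π if and only if there exists θ ∈ [−π, π] such that u(t) = √2 sin(φ_κ) cos(θ + t) τ(t) + √2 cos(φ_κ) sin(θ + t) n(t) for all t. -/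

import Mathlib

open Real Set MeasureTheory

/-- Squared Euclidean norm of a vector in `ℝ³`. -/
noncomputable def sq3 (v : Fin 3 → ℝ) : ℝ := v 0 ^ 2 + v 1 ^ 2 + v 2 ^ 2

/-- The outward unit normal `n(t) = (cos t, sin t, 0)` to the unit circle. -/
noncomputable def nvec (t : ℝ) : Fin 3 → ℝ := ![Real.cos t, Real.sin t, 0]

/-- The tangent field `τ(t) = (−sin t, cos t, 0)` to the unit circle. -/
noncomputable def tvec (t : ℝ) : Fin 3 → ℝ := ![-Real.sin t, Real.cos t, 0]

/-!
In the frame `u = a τ + b n + w e₃`, put `T = tan φ_κ`, so that `κ² = 2 / T - 2 T` and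
`c_κ² = 2 - 2 T`. Up to the exact derivative `(a b)'`, the deficit in the inequality is a positive
combination of `∫ (a' + T b)²`, `∫ (b' - a / T)²`, the Wirtinger deficits of `a` and `b`, and
`∫ w'²`, `∫ w²`. Since `1 / 2 < T < 1` (this is where `κ² < 3` enters), a vanishing deficit forces
`w = 0`, zero means for `a` and `b`, and hence the rotation equation `a' = -T b`, `(T b)' = a`,
whose solutions are `a = r cos (θ + t)`, `T b = r sin (θ + t)`. The normalization fixes `r`.
-/

lemma memLp_two_of_continuousOn_Icc {E : Type*} [NormedAddCommGroup E] {a b : ℝ} {f : ℝ → E}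
    (hf : ContinuousOn f (Icc a b)) : MemLp f 2 (volume.restrict (Ioc a b)) := by
  have hmono : volume.restrict (Ioc a b) ≤ volume.restrict (Icc a b) :=
    Measure.restrict_mono Ioc_subset_Icc_self le_rfl
  refine ((memLp_two_iff_integrable_sq_norm ?_).2 ?_).mono_measure hmono
  · exact hf.aestronglyMeasurable_of_isCompact isCompact_Icc measurableSet_Icc
  · exact (hf.norm.pow 2).integrableOn_Icc

section Wirtinger

variable {a b : ℝ} {f f' : ℝ → ℂ} {n : ℤ}

lemma fourierCoeffOn_deriv (hab : a < b) (hn : n ≠ 0)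
    (hf : ∀ x ∈ uIcc a b, HasDerivAt f (f' x) x) (hf' : IntervalIntegrable f' volume a b)
    (hper : f a = f b) :
    fourierCoeffOn hab f' n = 2 * π * Complex.I * n / (b - a) * fourierCoeffOn hab f n := by
  have hπ : (π : ℂ) ≠ 0 := mod_cast Real.pi_ne_zero
  have hn' : (n : ℂ) ≠ 0 := mod_cast hn
  have hba : (b : ℂ) - a ≠ 0 := mod_cast (sub_pos.2 hab).ne'
  rw [fourierCoeffOn_of_hasDerivAt hab hn hf hf', hper, sub_self, mul_zero, zero_sub]
  field_simp

lemma norm_sq_fourierCoeffOn_le_of_integral_eq_zero (hab : a < b)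
    (hf : ∀ x ∈ uIcc a b, HasDerivAt f (f' x) x) (hf' : IntervalIntegrable f' volume a b)
    (hper : f a = f b) (hmean : ∫ x in a..b, f x = 0) (n : ℤ) :
    ‖fourierCoeffOn hab f n‖ ^ 2
      ≤ ((b - a) / (2 * π)) ^ 2 * ‖fourierCoeffOn hab f' n‖ ^ 2 := by
  have hba : 0 < b - a := sub_pos.2 hab
  rcases eq_or_ne n 0 with rfl | hn
  · have hzero : fourierCoeffOn hab f 0 = 0 := by
      simp [fourierCoeffOn_eq_integral, hmean]
    rw [hzero, norm_zero, zero_pow two_ne_zero]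
    positivity
  · have hn1 : (1 : ℝ) ≤ (n : ℝ) ^ 2 := mod_cast (one_le_sq_iff_one_le_abs n).2 (Int.one_le_abs hn)
    have hnorm : ‖fourierCoeffOn hab f' n‖ ^ 2
        = (n : ℝ) ^ 2 * (2 * π / (b - a)) ^ 2 * ‖fourierCoeffOn hab f n‖ ^ 2 := by
      rw [fourierCoeffOn_deriv hab hn hf hf' hper, ← Complex.ofReal_sub]
      simp only [norm_mul, norm_div, Complex.norm_I, Complex.norm_real, Complex.norm_intCast,
        Complex.norm_ofNat, Real.norm_eq_abs, mul_pow, div_pow, sq_abs]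
      ring
    calc ‖fourierCoeffOn hab f n‖ ^ 2
        ≤ (n : ℝ) ^ 2 * ‖fourierCoeffOn hab f n‖ ^ 2 := le_mul_of_one_le_left (sq_nonneg _) hn1
      _ = ((b - a) / (2 * π)) ^ 2 * ‖fourierCoeffOn hab f' n‖ ^ 2 := by
        rw [hnorm]
        field_simp

theorem wirtinger_inequality (hab : a < b)
    (hf : ∀ x ∈ uIcc a b, HasDerivAt f (f' x) x) (hf' : MemLp f' 2 (volume.restrict (Ioc a b)))
    (hper : f a = f b) (hmean : ∫ x in a..b, f x = 0) :
    ∫ x in a..b, ‖f x‖ ^ 2 ≤ ((b - a) / (2 * π)) ^ 2 * ∫ x in a..b, ‖f' x‖ ^ 2 := by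
  have hfc : ContinuousOn f (Icc a b) := by
    rw [← uIcc_of_le hab.le]
    exact fun x hx => (hf x hx).continuousAt.continuousWithinAt
  have hfL2 : MemLp f 2 (volume.restrict (Ioc a b)) :=
    memLp_two_of_continuousOn_Icc hfc
  have hf'int : IntervalIntegrable f' volume a b :=
    (intervalIntegrable_iff_integrableOn_Ioc_of_le hab.le).2 (hf'.integrable one_le_two)
  have hparseval := hasSum_le
    (norm_sq_fourierCoeffOn_le_of_integral_eq_zero hab hf hf'int hper hmean)
    (hasSum_sq_fourierCoeffOn hab hfL2) ((hasSum_sq_fourierCoeffOn hab hf').mul_left _)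
  rw [mul_smul_comm, smul_eq_mul, smul_eq_mul] at hparseval
  exact le_of_mul_le_mul_left hparseval (inv_pos.2 (sub_pos.2 hab))

end Wirtinger

lemma eq_zero_of_periodic_of_integral_eq_zero {f : ℝ → ℝ} {T a : ℝ} (hT : 0 < T)
    (hf : Continuous f) (hper : Function.Periodic f T) (hnonneg : ∀ t, 0 ≤ f t)
    (hint : ∫ t in a..a + T, f t = 0) (t : ℝ) : f t = 0 := by
  by_contra hne
  have hpos : 0 < ∫ s in t..t + T, f s :=
    intervalIntegral.integral_pos (lt_add_of_pos_right t hT) hf.continuousOn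
      (fun s _ => hnonneg s) ⟨t, left_mem_Icc.2 (by linarith), (hnonneg t).lt_of_ne' hne⟩
  exact hpos.ne' (hper.intervalIntegral_add_eq t a ▸ hint)

lemma periodic_deriv {E : Type*} [NormedAddCommGroup E] [NormedSpace ℝ E] {f : ℝ → E} {T : ℝ}
    (hf : Function.Periodic f T) : Function.Periodic (deriv f) T := fun t => by
  rw [← deriv_comp_add_const, funext hf]

section IntegralDeriv

variable {f g : ℝ → ℝ} {a b : ℝ}

lemma integral_deriv_eq_zero_of_eq (hf : ContDiff ℝ 1 f) (hend : f a = f b) :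
    ∫ t in a..b, deriv f t = 0 := by
  rw [intervalIntegral.integral_deriv_eq_sub (fun t _ => hf.differentiable one_ne_zero t)
    ((hf.continuous_deriv le_rfl).intervalIntegrable _ _), hend, sub_self]

lemma integral_deriv_add_const_mul (hf : ContDiff ℝ 1 f) (hend : f a = f b) (hg : Continuous g)
    (c : ℝ) : ∫ t in a..b, (deriv f t + c * g t) = c * ∫ t in a..b, g t := by
  rw [intervalIntegral.integral_add ((hf.continuous_deriv le_rfl).intervalIntegrable _ _)
    (Continuous.intervalIntegrable (by fun_prop) _ _),
    integral_deriv_eq_zero_of_eq hf hend, zero_add, intervalIntegral.integral_const_mul]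

lemma integral_deriv_mul_add_mul_deriv (hf : ContDiff ℝ 1 f) (hg : ContDiff ℝ 1 g)
    (hfend : f a = f b) (hgend : g a = g b) :
    ∫ t in a..b, (deriv f t * g t + f t * deriv g t) = 0 := by
  rw [← integral_deriv_eq_zero_of_eq (hf.mul hg) (congrArg₂ (· * ·) hfend hgend)]
  refine intervalIntegral.integral_congr fun t _ => ?_
  exact (deriv_mul (hf.differentiable one_ne_zero t) (hg.differentiable one_ne_zero t)).symm

end IntegralDeriv

/-- The squared `L²` distance on `[-π, π]` from `f` to its mean. -/
noncomputable def squareDeviation (f : ℝ → ℝ) : ℝ :=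
  ∫ t in (-π)..π, (f t - ⨍ s in (-π)..π, f s) ^ 2

section Circle

variable {f : ℝ → ℝ}

lemma apply_neg_pi_eq_apply_pi (hper : Function.Periodic f (2 * π)) : f (-π) = f π := by
  rw [← hper (-π)]
  ring_nf

lemma squareDeviation_nonneg (f : ℝ → ℝ) : 0 ≤ squareDeviation f :=
  intervalIntegral.integral_nonneg (by linarith [Real.pi_pos]) fun _ _ => sq_nonneg _

lemma squareDeviation_eq (hf : Continuous f) :
    squareDeviation f = (∫ t in (-π)..π, f t ^ 2) - (∫ t in (-π)..π, f t) ^ 2 / (2 * π) := by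
  have hexpand (m : ℝ) : ∫ t in (-π)..π, (f t - m) ^ 2
      = (∫ t in (-π)..π, f t ^ 2) - 2 * m * (∫ t in (-π)..π, f t) + 2 * π * m ^ 2 := by
    have hpoint (t : ℝ) : (f t - m) ^ 2 = f t ^ 2 - 2 * m * f t + m ^ 2 := by ring
    simp only [hpoint]
    rw [intervalIntegral.integral_add (Continuous.intervalIntegrable (by fun_prop) _ _)
        (Continuous.intervalIntegrable (by fun_prop) _ _),
      intervalIntegral.integral_sub (Continuous.intervalIntegrable (by fun_prop) _ _)
        (Continuous.intervalIntegrable (by fun_prop) _ _),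
      intervalIntegral.integral_const_mul, intervalIntegral.integral_const, smul_eq_mul]
    ring
  rw [squareDeviation, hexpand, interval_average_eq_div]
  field_simp
  ring

lemma squareDeviation_le_integral_deriv_sq (hf : ContDiff ℝ 1 f)
    (hper : Function.Periodic f (2 * π)) :
    squareDeviation f ≤ ∫ t in (-π)..π, deriv f t ^ 2 := by
  have hlt : -π < π := by linarith [Real.pi_pos]
  have hf' : Continuous (deriv f) := hf.continuous_deriv le_rfl
  set m := ⨍ t in (-π)..π, f t with hm
  have hmean : ∫ t in (-π)..π, ((f t - m : ℝ) : ℂ) = 0 := by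
    rw [intervalIntegral.integral_ofReal,
      intervalIntegral.integral_sub (hf.continuous.intervalIntegrable _ _) (by simp),
      intervalIntegral.integral_const, hm, interval_average_eq, smul_smul,
      mul_inv_cancel₀ (by linarith), one_smul, sub_self, Complex.ofReal_zero]
  have hf'L2 : MemLp (fun t => ((deriv f t : ℝ) : ℂ)) 2 (volume.restrict (Ioc (-π) π)) :=
    memLp_two_of_continuousOn_Icc (Complex.continuous_ofReal.comp hf').continuousOn
  have hwirtinger := wirtinger_inequality hlt
    (fun t _ => ((hf.differentiable one_ne_zero t).hasDerivAt.sub_const m).ofReal_comp)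
    hf'L2 (by rw [apply_neg_pi_eq_apply_pi hper]) hmean
  have hscale : (π - -π) / (2 * π) = 1 := by
    field_simp
    ring
  simpa only [squareDeviation, ← hm, hscale, one_pow, one_mul, Complex.norm_real,
    Real.norm_eq_abs, sq_abs] using hwirtinger

lemma eq_zero_of_integral_sq_eq_zero (hf : Continuous f) (hper : Function.Periodic f (2 * π))
    (hint : ∫ t in (-π)..π, f t ^ 2 = 0) (t : ℝ) : f t = 0 := by
  have hshift : -π + 2 * π = π := by ring
  exact pow_eq_zero_iff two_ne_zero |>.1 <|
    eq_zero_of_periodic_of_integral_eq_zero (f := fun s => f s ^ 2) (a := -π) two_pi_pos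
      (by fun_prop) (fun s => by simp only [hper s]) (fun _ => sq_nonneg _)
      (by rw [hshift, hint]) t

lemma eq_zero_of_squareDeviation_eq_zero (hf : Continuous f) (hper : Function.Periodic f (2 * π))
    (hdev : squareDeviation f = 0) (hmean : ∫ t in (-π)..π, f t = 0) (t : ℝ) : f t = 0 := by
  rw [squareDeviation_eq hf, hmean, zero_pow two_ne_zero, zero_div, sub_zero] at hdev
  exact eq_zero_of_integral_sq_eq_zero hf hper hdev t

end Circle

section PlanarDeficit

/-- The deficit `∫ |u'|² + κ² ∫ |u × n|² - c² ∫ |u|²` of the planar field `u = a τ + b n`, where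
`κ² = 2 / T - 2 T` and `c² = 2 - 2 T` are parametrized by `T = tan φ_κ`. -/
noncomputable def planarDeficit (T : ℝ) (a b : ℝ → ℝ) : ℝ :=
  ∫ t in (-π)..π, ((deriv a t + b t) ^ 2 + (deriv b t - a t) ^ 2 + (2 / T - 2 * T) * a t ^ 2
    - (2 - 2 * T) * (a t ^ 2 + b t ^ 2))

variable {T : ℝ} {a b : ℝ → ℝ}

lemma planarDeficit_eq (hT : T ≠ 0) (ha : ContDiff ℝ 1 a) (hb : ContDiff ℝ 1 b)
    (hpa : Function.Periodic a (2 * π)) (hpb : Function.Periodic b (2 * π)) :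
    planarDeficit T a b
      = 2 * T / (1 + T ^ 2) * ((∫ t in (-π)..π, (deriv a t + T * b t) ^ 2)
          + ∫ t in (-π)..π, (deriv b t + -T⁻¹ * a t) ^ 2)
        + (1 - T) ^ 2 / (1 + T ^ 2)
          * (((∫ t in (-π)..π, deriv a t ^ 2) - ∫ t in (-π)..π, a t ^ 2)
            + ((∫ t in (-π)..π, deriv b t ^ 2) - ∫ t in (-π)..π, b t ^ 2)) := by
  have hint {f : ℝ → ℝ} (hf : Continuous f) : IntervalIntegrable f volume (-π) π :=
    hf.intervalIntegrable _ _
  have hpoint (t : ℝ) : (deriv a t + b t) ^ 2 + (deriv b t - a t) ^ 2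
        + (2 / T - 2 * T) * a t ^ 2 - (2 - 2 * T) * (a t ^ 2 + b t ^ 2)
      = 2 * T / (1 + T ^ 2) * ((deriv a t + T * b t) ^ 2 + (deriv b t + -T⁻¹ * a t) ^ 2)
        + (1 - T) ^ 2 / (1 + T ^ 2)
          * ((deriv a t ^ 2 - a t ^ 2) + (deriv b t ^ 2 - b t ^ 2))
        + 2 * (1 - T ^ 2) / (1 + T ^ 2) * (deriv a t * b t + a t * deriv b t) := by
    field_simp
    ring
  simp only [planarDeficit, hpoint]
  rw [intervalIntegral.integral_add (hint (by fun_prop)) (hint (by fun_prop)),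
    intervalIntegral.integral_add (hint (by fun_prop)) (hint (by fun_prop)),
    intervalIntegral.integral_const_mul, intervalIntegral.integral_const_mul,
    intervalIntegral.integral_const_mul, integral_deriv_mul_add_mul_deriv ha hb
      (apply_neg_pi_eq_apply_pi hpa) (apply_neg_pi_eq_apply_pi hpb),
    intervalIntegral.integral_add (hint (by fun_prop)) (hint (by fun_prop)),
    intervalIntegral.integral_add (hint (by fun_prop)) (hint (by fun_prop)),
    intervalIntegral.integral_sub (hint (by fun_prop)) (hint (by fun_prop)),
    intervalIntegral.integral_sub (hint (by fun_prop)) (hint (by fun_prop)), mul_zero, add_zero]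

/- Wirtinger's inequality loses the means, and the means of the two completed squares restore them
with a positive sign. -/
lemma le_planarDeficit (hT : 0 < T) (ha : ContDiff ℝ 1 a) (hb : ContDiff ℝ 1 b)
    (hpa : Function.Periodic a (2 * π)) (hpb : Function.Periodic b (2 * π)) :
    2 * T / (1 + T ^ 2) * (squareDeviation (fun t => deriv a t + T * b t)
          + squareDeviation (fun t => deriv b t + -T⁻¹ * a t))
        + (2 / T - 1) * ((∫ t in (-π)..π, a t) ^ 2 / (2 * π))
        + (2 * T - 1) * ((∫ t in (-π)..π, b t) ^ 2 / (2 * π))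
      ≤ planarDeficit T a b := by
  have hac := ha.continuous
  have hbc := hb.continuous
  have hdeficit_a := squareDeviation_le_integral_deriv_sq ha hpa
  have hdeficit_b := squareDeviation_le_integral_deriv_sq hb hpb
  rw [squareDeviation_eq hac] at hdeficit_a
  rw [squareDeviation_eq hbc] at hdeficit_b
  rw [planarDeficit_eq hT.ne' ha hb hpa hpb, squareDeviation_eq (by fun_prop),
    squareDeviation_eq (by fun_prop),
    integral_deriv_add_const_mul ha (apply_neg_pi_eq_apply_pi hpa) hbc,
    integral_deriv_add_const_mul hb (apply_neg_pi_eq_apply_pi hpb) hac]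
  have hloss := mul_le_mul_of_nonneg_left (add_le_add hdeficit_a hdeficit_b)
    (by positivity : 0 ≤ (1 - T) ^ 2 / (1 + T ^ 2))
  rw [← sub_nonneg] at hloss ⊢
  refine hloss.trans_eq ?_
  field_simp
  ring

lemma planarDeficit_nonneg (hT : 1 / 2 ≤ T) (hT2 : T ≤ 2) (ha : ContDiff ℝ 1 a)
    (hb : ContDiff ℝ 1 b) (hpa : Function.Periodic a (2 * π))
    (hpb : Function.Periodic b (2 * π)) : 0 ≤ planarDeficit T a b := by
  have hT0 : 0 < T := by linarith
  have hca : 0 ≤ 2 / T - 1 := sub_nonneg.2 ((one_le_div hT0).2 hT2)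
  have hcb : 0 ≤ 2 * T - 1 := by linarith
  refine le_trans ?_ (le_planarDeficit hT0 ha hb hpa hpb)
  have := squareDeviation_nonneg fun t => deriv a t + T * b t
  have := squareDeviation_nonneg fun t => deriv b t + -T⁻¹ * a t
  positivity

lemma means_eq_zero_and_squareDeviations_eq_zero (hT : 1 / 2 < T) (hT2 : T < 2)
    (ha : ContDiff ℝ 1 a) (hb : ContDiff ℝ 1 b) (hpa : Function.Periodic a (2 * π))
    (hpb : Function.Periodic b (2 * π)) (hzero : planarDeficit T a b = 0) :
    ((∫ t in (-π)..π, a t) = 0 ∧ (∫ t in (-π)..π, b t) = 0) ∧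
      squareDeviation (fun t => deriv a t + T * b t) = 0 ∧
      squareDeviation (fun t => deriv b t + -T⁻¹ * a t) = 0 := by
  have hT0 : 0 < T := by linarith
  have hca : 0 < 2 / T - 1 := sub_pos.2 ((one_lt_div hT0).2 hT2)
  have hcb : 0 < 2 * T - 1 := by linarith
  have hs : 0 < 2 * T / (1 + T ^ 2) := by positivity
  have hbound := le_planarDeficit hT0 ha hb hpa hpb
  have hdev_a := squareDeviation_nonneg fun t => deriv a t + T * b t
  have hdev_b := squareDeviation_nonneg fun t => deriv b t + -T⁻¹ * a t
  have hdevs := mul_nonneg hs.le (add_nonneg hdev_a hdev_b)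
  have hmean_a : 0 ≤ (2 / T - 1) * ((∫ t in (-π)..π, a t) ^ 2 / (2 * π)) := by positivity
  have hmean_b : 0 ≤ (2 * T - 1) * ((∫ t in (-π)..π, b t) ^ 2 / (2 * π)) := by positivity
  have hsum := (mul_eq_zero.1 (le_antisymm (by linarith) hdevs)).resolve_left hs.ne'
  have hmean_a_zero := (mul_eq_zero.1 (le_antisymm (by linarith) hmean_a)).resolve_left hca.ne'
  have hmean_b_zero := (mul_eq_zero.1 (le_antisymm (by linarith) hmean_b)).resolve_left hcb.ne'
  refine ⟨⟨?_, ?_⟩, by linarith, by linarith⟩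
  · simpa [pi_ne_zero] using hmean_a_zero
  · simpa [pi_ne_zero] using hmean_b_zero

lemma deriv_eq_of_planarDeficit_eq_zero (hT : 1 / 2 < T) (hT2 : T < 2)
    (ha : ContDiff ℝ 1 a) (hb : ContDiff ℝ 1 b) (hpa : Function.Periodic a (2 * π))
    (hpb : Function.Periodic b (2 * π)) (hzero : planarDeficit T a b = 0) (t : ℝ) :
    deriv a t = -(T * b t) ∧ deriv b t = a t / T := by
  obtain ⟨⟨hmean_a, hmean_b⟩, hdev_a, hdev_b⟩ :=
    means_eq_zero_and_squareDeviations_eq_zero hT hT2 ha hb hpa hpb hzero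
  have hac := ha.continuous
  have hbc := hb.continuous
  have hode_a := eq_zero_of_squareDeviation_eq_zero (by fun_prop)
    (fun s => by simp only [periodic_deriv hpa s, hpb s]) hdev_a
    (by rw [integral_deriv_add_const_mul ha (apply_neg_pi_eq_apply_pi hpa) hbc, hmean_b,
      mul_zero]) t
  have hode_b := eq_zero_of_squareDeviation_eq_zero (by fun_prop)
    (fun s => by simp only [periodic_deriv hpb s, hpa s]) hdev_b
    (by rw [integral_deriv_add_const_mul hb (apply_neg_pi_eq_apply_pi hpb) hac, hmean_a,
      mul_zero]) t
  exact ⟨by linarith, by rw [div_eq_inv_mul]; linarith⟩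

lemma planarDeficit_eq_zero_of_deriv_eq (hT : T ≠ 0) (ha : ContDiff ℝ 1 a) (hb : ContDiff ℝ 1 b)
    (hpa : Function.Periodic a (2 * π)) (hpb : Function.Periodic b (2 * π))
    (hode : ∀ t, deriv a t = -(T * b t) ∧ deriv b t = a t / T) : planarDeficit T a b = 0 := by
  have hpoint (t : ℝ) : (deriv a t + b t) ^ 2 + (deriv b t - a t) ^ 2
        + (2 / T - 2 * T) * a t ^ 2 - (2 - 2 * T) * (a t ^ 2 + b t ^ 2)
      = (1 - T ^ 2) / T * (deriv a t * b t + a t * deriv b t) := by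
    rw [(hode t).1, (hode t).2]
    field_simp
    ring
  simp only [planarDeficit, hpoint]
  rw [intervalIntegral.integral_const_mul, integral_deriv_mul_add_mul_deriv ha hb
      (apply_neg_pi_eq_apply_pi hpa) (apply_neg_pi_eq_apply_pi hpb), mul_zero]

end PlanarDeficit

section Rotation

variable {x y : ℝ → ℝ}

/- `z = x + i y` satisfies `z' = i z`, so `z e^{-it}` is constant. -/
lemma exists_polar_of_deriv_eq_rotation (hx : Differentiable ℝ x) (hy : Differentiable ℝ y)
    (hx' : ∀ t, deriv x t = -y t) (hy' : ∀ t, deriv y t = x t) :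
    ∃ r, 0 ≤ r ∧ ∃ θ ∈ Icc (-π) π, ∀ t, x t = r * cos (θ + t) ∧ y t = r * sin (θ + t) := by
  set z : ℂ := ⟨x 0, y 0⟩
  have hre (t : ℝ) : x t * cos t + y t * sin t = x 0 := by
    simpa using is_const_of_deriv_eq_zero (f := fun s => x s * cos s + y s * sin s) (by fun_prop)
      (fun s => by
        refine ((((hx s).hasDerivAt.mul (hasDerivAt_cos s)).add
          ((hy s).hasDerivAt.mul (hasDerivAt_sin s))).congr_deriv ?_).deriv
        rw [hx', hy']
        ring) t 0
  have him (t : ℝ) : y t * cos t - x t * sin t = y 0 := by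
    simpa using is_const_of_deriv_eq_zero (f := fun s => y s * cos s - x s * sin s) (by fun_prop)
      (fun s => by
        refine ((((hy s).hasDerivAt.mul (hasDerivAt_cos s)).sub
          ((hx s).hasDerivAt.mul (hasDerivAt_sin s))).congr_deriv ?_).deriv
        rw [hx', hy']
        ring) t 0
  have hcos : ‖z‖ * cos z.arg = x 0 := Complex.norm_mul_cos_arg z
  have hsin : ‖z‖ * sin z.arg = y 0 := Complex.norm_mul_sin_arg z
  refine ⟨‖z‖, norm_nonneg z, z.arg, ⟨(Complex.neg_pi_lt_arg z).le, Complex.arg_le_pi z⟩,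
    fun t => ⟨?_, ?_⟩⟩
  · rw [cos_add]
    linear_combination (-x t) * sin_sq_add_cos_sq t + cos t * (hre t - hcos)
      - sin t * (him t - hsin)
  · rw [sin_add]
    linear_combination (-y t) * sin_sq_add_cos_sq t + sin t * (hre t - hcos)
      + cos t * (him t - hsin)

end Rotation

section Frame

/-- The tangential component `u · τ` of a field along the unit circle. -/
noncomputable def tangential (u : ℝ → Fin 3 → ℝ) (t : ℝ) : ℝ := u t ⬝ᵥ tvec t

/-- The normal component `u · n` of a field along the unit circle. -/
noncomputable def normal (u : ℝ → Fin 3 → ℝ) (t : ℝ) : ℝ := u t ⬝ᵥ nvec t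

variable {u : ℝ → Fin 3 → ℝ} {t : ℝ} {v : Fin 3 → ℝ}

lemma dotProduct_tvec (v : Fin 3 → ℝ) (t : ℝ) : v ⬝ᵥ tvec t = -(v 0 * sin t) + v 1 * cos t := by
  simp [tvec, dotProduct, Fin.sum_univ_three]

lemma dotProduct_nvec (v : Fin 3 → ℝ) (t : ℝ) : v ⬝ᵥ nvec t = v 0 * cos t + v 1 * sin t := by
  simp [nvec, dotProduct, Fin.sum_univ_three]

lemma sq3_eq_frame (v : Fin 3 → ℝ) (t : ℝ) :
    sq3 v = (v ⬝ᵥ tvec t) ^ 2 + (v ⬝ᵥ nvec t) ^ 2 + v 2 ^ 2 := by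
  rw [sq3, dotProduct_tvec, dotProduct_nvec]
  linear_combination (-(v 0 ^ 2 + v 1 ^ 2)) * sin_sq_add_cos_sq t

lemma sq3_crossProduct_nvec (v : Fin 3 → ℝ) (t : ℝ) :
    sq3 (crossProduct v (nvec t)) = (v ⬝ᵥ tvec t) ^ 2 + v 2 ^ 2 := by
  simp only [sq3, cross_apply, dotProduct_tvec, nvec, Matrix.cons_val]
  linear_combination v 2 ^ 2 * sin_sq_add_cos_sq t

lemma eq_smul_tvec_add_smul_nvec_iff {p q : ℝ} :
    v = p • tvec t + q • nvec t ↔ v ⬝ᵥ tvec t = p ∧ v ⬝ᵥ nvec t = q ∧ v 2 = 0 := by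
  have hunit := sin_sq_add_cos_sq t
  rw [dotProduct_tvec, dotProduct_nvec]
  constructor
  · rintro rfl
    simp only [tvec, nvec, Pi.add_apply, Pi.smul_apply, smul_eq_mul, Matrix.cons_val, mul_zero,
      add_zero, and_true]
    exact ⟨by linear_combination p * hunit, by linear_combination q * hunit⟩
  · rintro ⟨rfl, rfl, hv⟩
    ext i
    fin_cases i
    · simp only [Fin.zero_eta, tvec, nvec, Pi.add_apply, Pi.smul_apply, smul_eq_mul,
        Matrix.cons_val]
      linear_combination (-v 0) * hunit
    · simp only [Fin.mk_one, tvec, nvec, Pi.add_apply, Pi.smul_apply, smul_eq_mul,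
        Matrix.cons_val]
      linear_combination (-v 1) * hunit
    · simp [tvec, nvec, hv]

lemma contDiff_tangential (hu : ContDiff ℝ 1 u) : ContDiff ℝ 1 (tangential u) := by
  unfold tangential
  simp only [dotProduct_tvec]
  fun_prop

lemma contDiff_normal (hu : ContDiff ℝ 1 u) : ContDiff ℝ 1 (normal u) := by
  unfold normal
  simp only [dotProduct_nvec]
  fun_prop

lemma periodic_tangential (hu : Function.Periodic u (2 * π)) :
    Function.Periodic (tangential u) (2 * π) := fun t => by
  simp only [tangential, dotProduct_tvec, hu t, sin_add_two_pi, cos_add_two_pi]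

lemma periodic_normal (hu : Function.Periodic u (2 * π)) :
    Function.Periodic (normal u) (2 * π) := fun t => by
  simp only [normal, dotProduct_nvec, hu t, sin_add_two_pi, cos_add_two_pi]

lemma deriv_dotProduct_tvec (hu : DifferentiableAt ℝ u t) :
    deriv u t ⬝ᵥ tvec t = deriv (tangential u) t + normal u t := by
  have hcoord := hasDerivAt_pi.1 hu.hasDerivAt
  have hderiv : HasDerivAt (tangential u) (deriv u t ⬝ᵥ tvec t - normal u t) t := by
    unfold tangential
    simp only [dotProduct_tvec, normal, dotProduct_nvec]
    exact (((hcoord 0).mul (hasDerivAt_sin t)).neg.add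
      ((hcoord 1).mul (hasDerivAt_cos t))).congr_deriv (by ring)
  rw [hderiv.deriv, sub_add_cancel]

lemma deriv_dotProduct_nvec (hu : DifferentiableAt ℝ u t) :
    deriv u t ⬝ᵥ nvec t = deriv (normal u) t - tangential u t := by
  have hcoord := hasDerivAt_pi.1 hu.hasDerivAt
  have hderiv : HasDerivAt (normal u) (deriv u t ⬝ᵥ nvec t + tangential u t) t := by
    unfold normal
    simp only [dotProduct_nvec, tangential, dotProduct_tvec]
    exact (((hcoord 0).mul (hasDerivAt_cos t)).add
      ((hcoord 1).mul (hasDerivAt_sin t))).congr_deriv (by ring)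
  rw [hderiv.deriv, add_sub_cancel_right]

end Frame

section PoincareDeficit

/-- The deficit in the Poincaré inequality, with `κ² = 2 / T - 2 T` and `c_κ² = 2 - 2 T`
parametrized by `T = tan φ_κ`. -/
noncomputable def poincareDeficit (T : ℝ) (u : ℝ → Fin 3 → ℝ) : ℝ :=
  (∫ t in (-π)..π, sq3 (deriv u t))
    + (2 / T - 2 * T) * (∫ t in (-π)..π, sq3 (crossProduct (u t) (nvec t)))
    - (2 - 2 * T) * ∫ t in (-π)..π, sq3 (u t)

variable {T : ℝ} {u : ℝ → Fin 3 → ℝ}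

lemma poincareDeficit_eq (T : ℝ) (hu : ContDiff ℝ 1 u) :
    poincareDeficit T u = planarDeficit T (tangential u) (normal u)
      + (∫ t in (-π)..π, deriv u t 2 ^ 2) + (2 / T - 2) * ∫ t in (-π)..π, u t 2 ^ 2 := by
  have hd (t : ℝ) : DifferentiableAt ℝ u t := hu.differentiable one_ne_zero t
  have ha := (contDiff_tangential hu).continuous
  have hb := (contDiff_normal hu).continuous
  have ha' := (contDiff_tangential hu).continuous_deriv le_rfl
  have hb' := (contDiff_normal hu).continuous_deriv le_rfl
  have huc := hu.continuous
  have hnorm : Continuous fun t => sq3 (u t) := by unfold sq3; fun_prop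
  have hnorm' : Continuous fun t => sq3 (deriv u t) := by unfold sq3; fun_prop
  have hcross : Continuous fun t => sq3 (crossProduct (u t) (nvec t)) := by
    simp only [sq3_crossProduct_nvec]
    exact (ha.pow 2).add (by fun_prop)
  have hint {f : ℝ → ℝ} (hf : Continuous f) : IntervalIntegrable f volume (-π) π :=
    hf.intervalIntegrable _ _
  calc poincareDeficit T u
      = ∫ t in (-π)..π, (sq3 (deriv u t) + (2 / T - 2 * T) * sq3 (crossProduct (u t) (nvec t))
          - (2 - 2 * T) * sq3 (u t)) := by
        rw [intervalIntegral.integral_sub (hint (by fun_prop)) (hint (by fun_prop)),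
          intervalIntegral.integral_add (hint (by fun_prop)) (hint (by fun_prop)),
          intervalIntegral.integral_const_mul, intervalIntegral.integral_const_mul,
          poincareDeficit]
    _ = ∫ t in (-π)..π, ((deriv (tangential u) t + normal u t) ^ 2
          + (deriv (normal u) t - tangential u t) ^ 2 + (2 / T - 2 * T) * tangential u t ^ 2
          - (2 - 2 * T) * (tangential u t ^ 2 + normal u t ^ 2)
          + deriv u t 2 ^ 2 + (2 / T - 2) * u t 2 ^ 2) := by
        refine intervalIntegral.integral_congr fun t _ => ?_
        simp only [sq3_crossProduct_nvec]
        rw [sq3_eq_frame (deriv u t) t, sq3_eq_frame (u t) t, deriv_dotProduct_tvec (hd t),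
          deriv_dotProduct_nvec (hd t), ← tangential, ← normal]
        ring
    _ = _ := by
        rw [intervalIntegral.integral_add (hint (by fun_prop)) (hint (by fun_prop)),
          intervalIntegral.integral_add (hint (by fun_prop)) (hint (by fun_prop)),
          intervalIntegral.integral_const_mul, planarDeficit]

theorem poincareDeficit_eq_zero_iff (hT : 1 / 2 < T) (hT1 : T < 1) (hu : ContDiff ℝ 1 u)
    (hper : Function.Periodic u (2 * π)) :
    poincareDeficit T u = 0 ↔ ∀ t, deriv (tangential u) t = -(T * normal u t) ∧
      deriv (normal u) t = tangential u t / T ∧ u t 2 = 0 := by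
  have hT0 : 0 < T := by linarith
  have hT2 : T < 2 := by linarith
  have hvert : 0 < 2 / T - 2 := sub_pos.2 ((lt_div_iff₀ hT0).2 (by linarith))
  have ha := contDiff_tangential hu
  have hb := contDiff_normal hu
  have hpa := periodic_tangential hper
  have hpb := periodic_normal hper
  rw [poincareDeficit_eq T hu]
  constructor
  · intro hzero
    have hplanar_nonneg := planarDeficit_nonneg hT.le hT2.le ha hb hpa hpb
    have hvert_deriv_nonneg : 0 ≤ ∫ t in (-π)..π, deriv u t 2 ^ 2 :=
      intervalIntegral.integral_nonneg (by linarith [pi_pos]) fun _ _ => sq_nonneg _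
    have hvert_nonneg : 0 ≤ (2 / T - 2) * ∫ t in (-π)..π, u t 2 ^ 2 :=
      mul_nonneg hvert.le <|
        intervalIntegral.integral_nonneg (by linarith [pi_pos]) fun _ _ => sq_nonneg _
    have hplanar : planarDeficit T (tangential u) (normal u) = 0 := by linarith
    have hvert_zero : ∫ t in (-π)..π, u t 2 ^ 2 = 0 :=
      (mul_eq_zero.1 (by linarith)).resolve_left hvert.ne'
    have hu2 := eq_zero_of_integral_sq_eq_zero (f := fun s => u s 2)
      ((continuous_apply 2).comp hu.continuous) (fun s => by simp only [hper s]) hvert_zero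
    intro t
    obtain ⟨hode_a, hode_b⟩ := deriv_eq_of_planarDeficit_eq_zero hT hT2 ha hb hpa hpb hplanar t
    exact ⟨hode_a, hode_b, hu2 t⟩
  · intro hode
    have hu2' (t : ℝ) : deriv u t 2 = 0 := by
      have hcoord := hasDerivAt_pi.1 (hu.differentiable one_ne_zero t).hasDerivAt 2
      rw [← hcoord.deriv, funext fun s => (hode s).2.2, deriv_const]
    rw [planarDeficit_eq_zero_of_deriv_eq hT0.ne' ha hb hpa hpb
      fun t => ⟨(hode t).1, (hode t).2.1⟩]
    simp [hu2', fun t => (hode t).2.2]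

end PoincareDeficit

section PlanarMode

/-- The planar field with tangential component `p cos (θ + t)` and normal component
`q sin (θ + t)`. -/
noncomputable def planarMode (p q θ t : ℝ) : Fin 3 → ℝ :=
  (p * cos (θ + t)) • tvec t + (q * sin (θ + t)) • nvec t

variable {T r θ p q : ℝ} {u : ℝ → Fin 3 → ℝ}

lemma forall_eq_planarMode_iff :
    (∀ t, u t = planarMode p q θ t) ↔ ∀ t, tangential u t = p * cos (θ + t) ∧
      normal u t = q * sin (θ + t) ∧ u t 2 = 0 :=
  forall_congr' fun _ => eq_smul_tvec_add_smul_nvec_iff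

lemma integral_sq3_planarMode (p q θ : ℝ) :
    ∫ t in (-π)..π, sq3 (planarMode p q θ t) = π * (p ^ 2 + q ^ 2) := by
  have hpoint (t : ℝ) : sq3 (planarMode p q θ t)
      = p ^ 2 * cos (θ + t) ^ 2 + q ^ 2 * sin (θ + t) ^ 2 := by
    obtain ⟨htan, hnor, hvert⟩ := eq_smul_tvec_add_smul_nvec_iff.1 (planarMode.eq_def p q θ t)
    rw [sq3_eq_frame _ t, htan, hnor, hvert]
    ring
  simp only [hpoint]
  rw [intervalIntegral.integral_add (Continuous.intervalIntegrable (by fun_prop) _ _)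
      (Continuous.intervalIntegrable (by fun_prop) _ _),
    intervalIntegral.integral_const_mul, intervalIntegral.integral_const_mul,
    intervalIntegral.integral_comp_add_left (fun s => cos s ^ 2),
    intervalIntegral.integral_comp_add_left (fun s => sin s ^ 2), integral_cos_sq,
    integral_sin_sq, ← sub_eq_add_neg, cos_add_pi, cos_sub_pi, sin_add_pi, sin_sub_pi]
  ring

lemma deriv_eq_of_planarMode (hT : T ≠ 0) (hu : ∀ t, u t = planarMode (T * r) r θ t) (t : ℝ) :
    deriv (tangential u) t = -(T * normal u t) ∧ deriv (normal u) t = tangential u t / T ∧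
      u t 2 = 0 := by
  have hcomp := forall_eq_planarMode_iff.1 hu
  have hsum : HasDerivAt (fun s => θ + s) 1 t := (hasDerivAt_id t).const_add θ
  refine ⟨?_, ?_, (hcomp t).2.2⟩
  · rw [funext fun s => (hcomp s).1, (hcomp t).2.1, (hsum.cos.const_mul (T * r)).deriv]
    ring
  · rw [funext fun s => (hcomp s).2.1, (hcomp t).1, (hsum.sin.const_mul r).deriv]
    field_simp

lemma exists_planarMode_of_deriv_eq (hT : 0 < T) (hu : ContDiff ℝ 1 u)
    (hode : ∀ t, deriv (tangential u) t = -(T * normal u t) ∧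
      deriv (normal u) t = tangential u t / T ∧ u t 2 = 0) :
    ∃ r, 0 ≤ r ∧ ∃ θ ∈ Icc (-π) π, ∀ t, u t = planarMode (T * r) r θ t := by
  have hnormal : Differentiable ℝ (normal u) := (contDiff_normal hu).differentiable one_ne_zero
  obtain ⟨r, hr, θ, hθ, hpolar⟩ := exists_polar_of_deriv_eq_rotation
    ((contDiff_tangential hu).differentiable one_ne_zero) (hnormal.const_mul T)
    (fun t => (hode t).1)
    (fun t => by rw [deriv_const_mul _ (hnormal t), (hode t).2.1, mul_div_cancel₀ _ hT.ne'])
  refine ⟨r / T, by positivity, θ, hθ, forall_eq_planarMode_iff.2 fun t => ⟨?_, ?_, (hode t).2.2⟩⟩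
  · rw [mul_div_cancel₀ _ hT.ne', (hpolar t).1]
  · rw [div_mul_eq_mul_div, ← (hpolar t).2, mul_div_cancel_left₀ _ hT.ne']

end PlanarMode

section Angle

variable {k T φ : ℝ}

lemma half_arctan_mem_Ioo (hk : 0 < k) : arctan (4 / k) / 2 ∈ Ioo 0 (π / 4) :=
  ⟨half_pos (arctan_pos.2 (by positivity)), by linarith [arctan_lt_pi_div_two (4 / k)]⟩

lemma tan_mem_Ioo_of_mem_Ioo (hφ : φ ∈ Ioo 0 (π / 4)) : tan φ ∈ Ioo 0 1 := by
  have hπ := pi_pos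
  refine ⟨tan_pos_of_pos_of_lt_pi_div_two hφ.1 (by linarith [hφ.2]), ?_⟩
  rw [← tan_pi_div_four]
  exact tan_lt_tan_of_nonneg_of_lt_pi_div_two hφ.1.le (by linarith) hφ.2

lemma eq_two_div_tan_sub (hk : 0 < k) :
    k = 2 / tan (arctan (4 / k) / 2) - 2 * tan (arctan (4 / k) / 2) := by
  have htan := tan_mem_Ioo_of_mem_Ioo (half_arctan_mem_Ioo hk)
  have hdouble : 4 / k = 2 * tan (arctan (4 / k) / 2) / (1 - tan (arctan (4 / k) / 2) ^ 2) := by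
    rw [← tan_two_mul, mul_div_cancel₀ _ two_ne_zero, tan_arctan]
  set T := tan (arctan (4 / k) / 2)
  have hT := htan.1
  have hT1 : 0 < 1 - T ^ 2 := by nlinarith [htan.2]
  field_simp at hdouble ⊢
  linarith

lemma poincareConstant_eq (hT : 0 < T) (hk : k = 2 / T - 2 * T) :
    (k - √(k ^ 2 + 16) + 4) / 2 = 2 - 2 * T := by
  have hsq : k ^ 2 + 16 = (2 / T + 2 * T) ^ 2 := by
    rw [hk]
    field_simp
    ring
  rw [hsq, sqrt_sq (by positivity), hk]
  ring

lemma half_lt_of_lt_three (hT : 0 < T) (hk : 2 / T - 2 * T < 3) : 1 / 2 < T := by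
  by_contra! hle
  have : 4 ≤ 2 / T := (le_div_iff₀ hT).2 (by linarith)
  linarith

end Angle

theorem minimizer_iff_exists_planarMode {φ : ℝ} {u : ℝ → Fin 3 → ℝ} (hφ : φ ∈ Ioo 0 (π / 4))
    (hT : 1 / 2 < tan φ) (hu : ContDiff ℝ 1 u) (hper : Function.Periodic u (2 * π)) :
    (poincareDeficit (tan φ) u = 0 ∧ ∫ t in (-π)..π, sq3 (u t) = 2 * π) ↔
      ∃ θ ∈ Icc (-π) π, ∀ t, u t = planarMode (√2 * sin φ) (√2 * cos φ) θ t := by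
  have htan := tan_mem_Ioo_of_mem_Ioo hφ
  have hcos : 0 < cos φ :=
    cos_pos_of_mem_Ioo ⟨by linarith [hφ.1, pi_pos], by linarith [hφ.2, pi_pos]⟩
  have hsin : tan φ * (√2 * cos φ) = √2 * sin φ := by
    rw [mul_left_comm, tan_mul_cos hcos.ne']
  have hsqrt : √2 ^ 2 = (2 : ℝ) := sq_sqrt zero_le_two
  rw [poincareDeficit_eq_zero_iff hT htan.2 hu hper]
  constructor
  · rintro ⟨hode, hnorm⟩
    obtain ⟨r, hr, θ, hθ, hmode⟩ := exists_planarMode_of_deriv_eq htan.1 hu hode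
    have hr2 : r ^ 2 = (√2 * cos φ) ^ 2 := by
      simp only [hmode, integral_sq3_planarMode] at hnorm
      rw [mul_pow, hsqrt, ← inv_one_add_tan_sq hcos.ne']
      field_simp
      exact mul_left_cancel₀ pi_ne_zero (by linear_combination hnorm)
    obtain rfl : r = √2 * cos φ := (sq_eq_sq₀ hr (by positivity)).1 hr2
    exact ⟨θ, hθ, hsin ▸ hmode⟩
  · rintro ⟨θ, -, hmode⟩
    refine ⟨deriv_eq_of_planarMode htan.1.ne' (hsin.symm ▸ hmode), ?_⟩
    simp only [hmode, integral_sq3_planarMode, mul_pow, hsqrt]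
    linear_combination 2 * π * sin_sq_add_cos_sq φ

/-- **Equality case of the sharp Poincaré-type inequality for `0 < κ² < 3`**
(where `c_κ² = (κ² − √(κ⁴+16) + 4)/2`): a `C¹` `2π`-periodic `u` normalized by
`∫ |u|² = 2π` attains equality if and only if it belongs to the explicit
one-parameter family determined by `φ_κ = (1/2) arctan(4/κ²)`. -/
theorem poincare_equality_case_small_kappa
    (κ : ℝ) (hκ : 0 < κ ^ 2) (hκ3 : κ ^ 2 < 3)
    (u : ℝ → Fin 3 → ℝ)
    (hu : ContDiff ℝ 1 u)
    (hper : ∀ t : ℝ, u (t + 2 * π) = u t) :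
    (((∫ t in (-π)..π, sq3 (deriv u t))
        + κ ^ 2 * (∫ t in (-π)..π, sq3 (crossProduct (u t) (nvec t)))
        = (κ ^ 2 - Real.sqrt (κ ^ 4 + 16) + 4) / 2 * ∫ t in (-π)..π, sq3 (u t)) ∧
      (∫ t in (-π)..π, sq3 (u t)) = 2 * π) ↔
    (∃ θ ∈ Icc (-π) π, ∀ t : ℝ, u t =
        (Real.sqrt 2 * Real.sin (Real.arctan (4 / κ ^ 2) / 2) * Real.cos (θ + t)) • tvec t
          + (Real.sqrt 2 * Real.cos (Real.arctan (4 / κ ^ 2) / 2) * Real.sin (θ + t)) • nvec t) := by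
  have hT := (tan_mem_Ioo_of_mem_Ioo (half_arctan_mem_Ioo hκ)).1
  have hκT := eq_two_div_tan_sub hκ
  have hT_half := half_lt_of_lt_three hT (hκT ▸ hκ3)
  rw [show κ ^ 4 = (κ ^ 2) ^ 2 by ring, poincareConstant_eq hT hκT]
  refine Iff.trans (and_congr_left' ?_)
    (minimizer_iff_exists_planarMode (half_arctan_mem_Ioo hκ) hT_half hu hper)
  rw [poincareDeficit, ← hκT, sub_eq_zero]
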